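/- Let N ≥ 1, 0 < γ < min{2, N}, and let g : [0,∞) → [0,∞) be a non-decreasing Lipschitz function with g(0) = 0. Let u₀ : ℝ^N → ℝ be a non-negative essentially bounded measurable function. Then there exists a unique non-negative function u : ℝ^N × [0,∞) → ℝ such that for every T > 0, u is essentially bounded on ℝ^N × (0,T), and for almost every (x,t) with t ∈ [0,T], u(x,t) = ∫_{ℝ^N} G_t(x−y) u₀(y) dy + ∫₀ᵗ ∫_{ℝ^N} G_{t−σ}(x−y) |y|^{−γ} g(u(y,σ)) dy dσ. -/

import Mathlib

open MeasureTheory Filter Real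

/-- The heat kernel `G_t(x) = (4πt)^{-N/2} exp(-|x|²/(4t))` on `ℝ^N`. -/
noncomputable def heatKernel (N : ℕ) (t : ℝ) (x : EuclideanSpace ℝ (Fin N)) : ℝ :=
  (4 * π * t) ^ (-(N : ℝ) / 2) * Real.exp (-‖x‖ ^ 2 / (4 * t))

/-- `u` is a non-negative mild solution of `u_t - Δu = |x|^{-γ} g(u)`,
`u(·,0) = u₀`, which is (measurable and) essentially bounded on
`ℝ^N × (0,T)` for every `T > 0`, the integral equation holding for almost
every `(x,t)` with `t ∈ (0,T]`. -/
def IsLipSolution (N : ℕ) (γ : ℝ) (g : ℝ → ℝ)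
    (u₀ : EuclideanSpace ℝ (Fin N) → ℝ)
    (u : EuclideanSpace ℝ (Fin N) → ℝ → ℝ) : Prop :=
  -- u is non-negative
  (∀ x t, 0 ≤ t → 0 ≤ u x t) ∧
  AEMeasurable (fun p : EuclideanSpace ℝ (Fin N) × ℝ => u p.1 p.2) ∧
  -- u is essentially bounded on ℝ^N × (0,T) for every T > 0
  (∀ T : ℝ, 0 < T → ∃ C : ℝ,
    ∀ᵐ p : EuclideanSpace ℝ (Fin N) × ℝ ∂volume,
      p.2 ∈ Set.Ioo 0 T → |u p.1 p.2| ≤ C) ∧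
  -- the integral equation, for a.e. (x,t) with 0 < t ≤ T
  (∀ T : ℝ, 0 < T →
    ∀ᵐ p : EuclideanSpace ℝ (Fin N) × ℝ ∂volume, p.2 ∈ Set.Ioc 0 T →
      u p.1 p.2 = (∫ y, heatKernel N p.2 (p.1 - y) * u₀ y) +
        ∫ σ in (0 : ℝ)..p.2, ∫ y,
          heatKernel N (p.2 - σ) (p.1 - y) * ‖y‖ ^ (-γ) * g (u y σ))

/-! The integral equation is a fixed-point problem for the space-time kernel
`G_{t-s}(x - y) |y|^{-γ} 1_{0 < s < t}`. Bounding `G_t` by its maximum on the ball of radius `√t`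
and `|y|^{-γ}` by `t^{-γ/2}` outside it gives `∫ G_t(x - y) |y|^{-γ} dy ≤ M t^{-γ/2}`, which is
integrable in time because `γ < 2`. Hence, in the norm `sup e^{-l|t|} |u(x, t)|`, the Duhamel
operator has norm `O(l^{γ/2 - 1})`, and for large `l` the Lipschitz nonlinearity makes the
right-hand side a contraction. The kernel only looks into the past, so it can be restricted to a
strip `0 < t < T`, where every solution is bounded; uniqueness on each strip follows. -/

section Hammerstein

open scoped NNReal

theorem norm_apply_le_of_lipschitzWith {E F : Type*} [SeminormedAddCommGroup E]
    [SeminormedAddCommGroup F] {K : ℝ≥0} {φ : E → F} (hφ : LipschitzWith K φ) {x : E} {C W : ℝ}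
    (hW : 1 ≤ W) (hx : ‖x‖ ≤ C * W) : ‖φ x‖ ≤ (‖φ 0‖ + K * C) * W :=
  calc ‖φ x‖ ≤ ‖φ 0‖ + ‖φ x - φ 0‖ := norm_le_norm_add_norm_sub' _ _
    _ ≤ ‖φ 0‖ * W + K * (C * W) := by
        refine add_le_add (le_mul_of_one_le_right (norm_nonneg _) hW) ?_
        exact (hφ.norm_sub_le _ _).trans (by rw [sub_zero]; gcongr)
    _ = (‖φ 0‖ + K * C) * W := by ring

variable {P E : Type*} [MeasurableSpace P] {ν : Measure P} {k : P → P → ℝ} {w : P → ℝ} {c : ℝ}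
  [NormedAddCommGroup E] [NormedSpace ℝ E] {K : ℝ≥0} {φ : E → E} {h u v : P → E} {A C C' D : ℝ}

/-- A non-negative kernel `k` on `(P, ν)` whose integral operator has norm at most `c` on the space
of functions with finite weighted supremum norm `sup ‖f p‖ / w p`. The weight is at least `1`, so
that constants belong to this space. -/
structure IsWeightedKernel (ν : Measure P) (k : P → P → ℝ) (w : P → ℝ) (c : ℝ) : Prop where
  measurable : Measurable (Function.uncurry k)
  nonneg : ∀ p q, 0 ≤ k p q
  one_le_weight : ∀ q, 1 ≤ w q
  const_nonneg : 0 ≤ c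
  integrable : ∀ p, Integrable (fun q => k p q * w q) ν
  integral_le : ∀ p, ∫ q, k p q * w q ∂ν ≤ c * w p

/-- The right-hand side `h p + ∫ k(p, q) φ(u q) dν(q)` of the Hammerstein integral equation with
kernel `k`, nonlinearity `φ` and forcing term `h`; solutions are the fixed points of this map. -/
noncomputable def hammersteinMap (ν : Measure P) (k : P → P → ℝ) (φ : E → E) (h u : P → E)
    (p : P) : E :=
  h p + ∫ q, k p q • φ (u q) ∂ν

namespace IsWeightedKernel

theorem restrict (hk : IsWeightedKernel ν k w c) (S : Set P) :
    IsWeightedKernel (ν.restrict S) k w c where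
  __ := hk
  integrable p := (hk.integrable p).integrableOn
  integral_le p := (setIntegral_le_integral (hk.integrable p) (.of_forall fun q =>
    mul_nonneg (hk.nonneg p q) (zero_le_one.trans (hk.one_le_weight q)))).trans (hk.integral_le p)

theorem norm_smul_le (hk : IsWeightedKernel ν k w c) {f : P → E} {q : P} (hf : ‖f q‖ ≤ D * w q)
    (p : P) : ‖k p q • f q‖ ≤ D * (k p q * w q) := by
  rw [norm_smul, Real.norm_of_nonneg (hk.nonneg p q), mul_left_comm]
  exact mul_le_mul_of_nonneg_left hf (hk.nonneg p q)

theorem integrable_smul (hk : IsWeightedKernel ν k w c) {f : P → E}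
    (hfm : AEStronglyMeasurable f ν) (hf : ∀ᵐ q ∂ν, ‖f q‖ ≤ D * w q) (p : P) :
    Integrable (fun q => k p q • f q) ν :=
  ((hk.integrable p).const_mul D).mono'
    ((hk.measurable.comp measurable_prodMk_left).aestronglyMeasurable.smul hfm)
    (hf.mono fun _ hq => hk.norm_smul_le hq p)

theorem norm_integral_smul_le (hk : IsWeightedKernel ν k w c) {f : P → E} (hD : 0 ≤ D)
    (hf : ∀ᵐ q ∂ν, ‖f q‖ ≤ D * w q) (p : P) : ‖∫ q, k p q • f q ∂ν‖ ≤ c * D * w p :=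
  calc ‖∫ q, k p q • f q ∂ν‖ ≤ ∫ q, D * (k p q * w q) ∂ν :=
        norm_integral_le_of_norm_le ((hk.integrable p).const_mul D)
          (hf.mono fun _ hq => hk.norm_smul_le hq p)
    _ = D * ∫ q, k p q * w q ∂ν := integral_const_mul _ _
    _ ≤ D * (c * w p) := mul_le_mul_of_nonneg_left (hk.integral_le p) hD
    _ = c * D * w p := by ring

theorem integrable_smul_comp (hk : IsWeightedKernel ν k w c) (hφ : LipschitzWith K φ)
    (hu : AEStronglyMeasurable u ν) (huC : ∀ᵐ q ∂ν, ‖u q‖ ≤ C * w q) (p : P) :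
    Integrable (fun q => k p q • φ (u q)) ν :=
  hk.integrable_smul (hφ.continuous.comp_aestronglyMeasurable hu)
    (huC.mono fun _ hq => norm_apply_le_of_lipschitzWith hφ (hk.one_le_weight _) hq) p

theorem norm_hammersteinMap_le (hk : IsWeightedKernel ν k w c) (hφ : LipschitzWith K φ)
    (hC : 0 ≤ C) (hh : ∀ p, ‖h p‖ ≤ A * w p) (huC : ∀ᵐ q ∂ν, ‖u q‖ ≤ C * w q) (p : P) :
    ‖hammersteinMap ν k φ h u p‖ ≤ (A + c * (‖φ 0‖ + K * C)) * w p := by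
  rw [add_mul]
  exact norm_add_le_of_le (hh p) (hk.norm_integral_smul_le (by positivity)
    (huC.mono fun _ hq => norm_apply_le_of_lipschitzWith hφ (hk.one_le_weight _) hq) p)

theorem norm_hammersteinMap_sub_le (hk : IsWeightedKernel ν k w c) (hφ : LipschitzWith K φ)
    (hu : AEStronglyMeasurable u ν) (huC : ∀ᵐ q ∂ν, ‖u q‖ ≤ C * w q)
    (hv : AEStronglyMeasurable v ν) (hvC : ∀ᵐ q ∂ν, ‖v q‖ ≤ C' * w q)
    (hD : 0 ≤ D) (huv : ∀ᵐ q ∂ν, ‖u q - v q‖ ≤ D * w q) (p : P) :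
    ‖hammersteinMap ν k φ h u p - hammersteinMap ν k φ h v p‖ ≤ K * c * D * w p := by
  rw [hammersteinMap, hammersteinMap, add_sub_add_left_eq_sub,
    ← integral_sub (hk.integrable_smul_comp hφ hu huC p) (hk.integrable_smul_comp hφ hv hvC p)]
  simp_rw [← smul_sub]
  have hφuv : ∀ᵐ q ∂ν, ‖φ (u q) - φ (v q)‖ ≤ K * D * w q := huv.mono fun q hq =>
    (hφ.norm_sub_le _ _).trans (by rw [mul_assoc]; gcongr)
  exact (hk.norm_integral_smul_le (by positivity) hφuv p).trans_eq (by ring)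

theorem ae_eq_of_ae_eq_hammersteinMap (hk : IsWeightedKernel ν k w c) (hφ : LipschitzWith K φ)
    (hKc : K * c < 1)
    (hu : AEStronglyMeasurable u ν) (huC : ∀ᵐ q ∂ν, ‖u q‖ ≤ C * w q)
    (hv : AEStronglyMeasurable v ν) (hvC : ∀ᵐ q ∂ν, ‖v q‖ ≤ C' * w q)
    (hueq : u =ᵐ[ν] hammersteinMap ν k φ h u) (hveq : v =ᵐ[ν] hammersteinMap ν k φ h v) :
    u =ᵐ[ν] v := by
  have hKc0 : 0 ≤ K * c := mul_nonneg K.2 hk.const_nonneg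
  have hpow : ∀ n : ℕ, ∀ᵐ p ∂ν, ‖u p - v p‖ ≤ (K * c) ^ n * |C + C'| * w p := fun n => by
    induction n with
    | zero =>
      filter_upwards [huC, hvC] with p hup hvp
      have hw := zero_le_one.trans (hk.one_le_weight p)
      calc ‖u p - v p‖ ≤ C * w p + C' * w p := norm_sub_le_of_le hup hvp
        _ = (C + C') * w p := by ring
        _ ≤ (K * c) ^ 0 * |C + C'| * w p := by
            rw [pow_zero, one_mul]; gcongr; exact le_abs_self _
    | succ n ih =>
      filter_upwards [hueq, hveq] with p hup hvp
      rw [hup, hvp, pow_succ', mul_assoc (K * c : ℝ)]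
      exact hk.norm_hammersteinMap_sub_le hφ hu huC hv hvC (by positivity) ih p
  filter_upwards [ae_all_iff.2 hpow] with p hp
  have hlim : Tendsto (fun n => (K * c) ^ n * |C + C'| * w p) atTop (nhds 0) := by
    simpa only [zero_mul, mul_assoc] using
      (tendsto_pow_atTop_nhds_zero_of_lt_one hKc0 hKc).mul_const (|C + C'| * w p)
  exact sub_eq_zero.1 (norm_le_zero_iff.1 (ge_of_tendsto' hlim hp))

theorem tendsto_hammersteinMap (hk : IsWeightedKernel ν k w c) (hφ : LipschitzWith K φ)
    {U : ℕ → P → E} (hU : ∀ n, AEStronglyMeasurable (U n) ν)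
    (hUC : ∀ n, ∀ᵐ q ∂ν, ‖U n q‖ ≤ C * w q)
    (hlim : ∀ᵐ q ∂ν, Tendsto (fun n => U n q) atTop (nhds (u q))) (p : P) :
    Tendsto (fun n => hammersteinMap ν k φ h (U n) p) atTop
      (nhds (hammersteinMap ν k φ h u p)) :=
  tendsto_const_nhds.add <| tendsto_integral_of_dominated_convergence
    (fun q => (‖φ 0‖ + K * C) * (k p q * w q))
    (fun n => (hk.integrable_smul_comp hφ (hU n) (hUC n) p).aestronglyMeasurable)
    ((hk.integrable p).const_mul _)
    (fun n => (hUC n).mono fun _ hq => hk.norm_smul_le (f := fun q => φ (U n q))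
      (norm_apply_le_of_lipschitzWith hφ (hk.one_le_weight _) hq) p)
    (hlim.mono fun q hq => ((hφ.continuous.tendsto (u q)).comp hq).const_smul (k p q))

theorem stronglyMeasurable_hammersteinMap [SFinite ν] (hk : IsWeightedKernel ν k w c)
    (hφ : LipschitzWith K φ) (hh : StronglyMeasurable h) (hu : StronglyMeasurable u) :
    StronglyMeasurable (hammersteinMap ν k φ h u) :=
  hh.add <| StronglyMeasurable.integral_prod_right (f := fun p q => k p q • φ (u q)) <|
    hk.measurable.stronglyMeasurable.smul
      (hφ.continuous.comp_stronglyMeasurable (hu.comp_measurable measurable_snd))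

theorem stronglyMeasurable_iterate_hammersteinMap [SFinite ν] (hk : IsWeightedKernel ν k w c)
    (hφ : LipschitzWith K φ) (hh : StronglyMeasurable h) (n : ℕ) :
    StronglyMeasurable ((hammersteinMap ν k φ h)^[n] 0) := by
  induction n with
  | zero => exact stronglyMeasurable_zero
  | succ n ih =>
    rw [Function.iterate_succ_apply']
    exact hk.stronglyMeasurable_hammersteinMap hφ hh ih

theorem norm_iterate_hammersteinMap_le (hk : IsWeightedKernel ν k w c) (hφ : LipschitzWith K φ)
    (hhA : ∀ p, ‖h p‖ ≤ A * w p) (hC : 0 ≤ C) (hAC : A + c * (‖φ 0‖ + K * C) ≤ C)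
    (n : ℕ) (p : P) : ‖(hammersteinMap ν k φ h)^[n] 0 p‖ ≤ C * w p := by
  have hw : ∀ p, 0 ≤ w p := fun p => zero_le_one.trans (hk.one_le_weight p)
  induction n generalizing p with
  | zero => simpa only [Function.iterate_zero_apply, Pi.zero_apply, norm_zero] using
      mul_nonneg hC (hw p)
  | succ n ih =>
    rw [Function.iterate_succ_apply']
    exact (hk.norm_hammersteinMap_le hφ hC hhA (.of_forall ih) p).trans
      (mul_le_mul_of_nonneg_right hAC (hw p))

theorem norm_iterate_succ_hammersteinMap_sub_le [SFinite ν] (hk : IsWeightedKernel ν k w c)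
    (hφ : LipschitzWith K φ) (hh : StronglyMeasurable h) (hC : 0 ≤ C)
    (hUC : ∀ n p, ‖(hammersteinMap ν k φ h)^[n] 0 p‖ ≤ C * w p) (n : ℕ) (p : P) :
    ‖(hammersteinMap ν k φ h)^[n + 1] 0 p - (hammersteinMap ν k φ h)^[n] 0 p‖ ≤
      (K * c) ^ n * C * w p := by
  have hc := hk.const_nonneg
  have hUm : ∀ n, AEStronglyMeasurable ((hammersteinMap ν k φ h)^[n] 0) ν := fun n =>
    (hk.stronglyMeasurable_iterate_hammersteinMap hφ hh n).aestronglyMeasurable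
  induction n generalizing p with
  | zero => simpa using hUC 1 p
  | succ n ih =>
    have hstep := hk.norm_hammersteinMap_sub_le (h := h) hφ (hUm (n + 1))
      (.of_forall (hUC (n + 1))) (hUm n) (.of_forall (hUC n)) (by positivity) (.of_forall ih) p
    simp only [← Function.iterate_succ_apply' (hammersteinMap ν k φ h)] at hstep
    exact hstep.trans_eq (by ring)

theorem exists_hammersteinMap_eq_self [SFinite ν] [CompleteSpace E]
    (hk : IsWeightedKernel ν k w c) (hφ : LipschitzWith K φ) (hKc : K * c < 1)
    (hh : StronglyMeasurable h) (hA : 0 ≤ A) (hhA : ∀ p, ‖h p‖ ≤ A * w p) :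
    ∃ u : P → E, StronglyMeasurable u ∧ (∃ C, 0 ≤ C ∧ ∀ p, ‖u p‖ ≤ C * w p) ∧
      hammersteinMap ν k φ h u = u := by
  let U : ℕ → P → E := fun n => (hammersteinMap ν k φ h)^[n] 0
  have hUm : ∀ n, StronglyMeasurable (U n) := hk.stronglyMeasurable_iterate_hammersteinMap hφ hh
  obtain ⟨C, hC, hUC⟩ : ∃ C, 0 ≤ C ∧ ∀ n p, ‖U n p‖ ≤ C * w p := by
    have hc := hk.const_nonneg
    -- `C` is the fixed point of the growth bound `C ↦ A + c (‖φ 0‖ + K C)`.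
    let C := (A + c * ‖φ 0‖) / (1 - K * c)
    have hC : 0 ≤ C := div_nonneg (by positivity) (sub_nonneg.2 hKc.le)
    have hCeq : C * (1 - K * c) = A + c * ‖φ 0‖ := div_mul_cancel₀ _ (sub_pos.2 hKc).ne'
    exact ⟨C, hC, hk.norm_iterate_hammersteinMap_le hφ hhA hC (by linarith)⟩
  have hUcauchy : ∀ p, CauchySeq fun n => U n p := fun p =>
    cauchySeq_of_le_geometric (K * c) (C * w p) hKc fun n => by
      rw [dist_comm, dist_eq_norm]
      exact (hk.norm_iterate_succ_hammersteinMap_sub_le hφ hh hC hUC n p).trans_eq (by ring)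
  choose u hu using fun p => cauchySeq_tendsto_of_complete (hUcauchy p)
  refine ⟨u, stronglyMeasurable_of_tendsto atTop hUm (tendsto_pi_nhds.2 hu), ⟨C, hC, fun p =>
    le_of_tendsto' (hu p).norm fun n => hUC n p⟩, funext fun p => ?_⟩
  have hlim : Tendsto (fun n => U (n + 1) p) atTop (nhds (hammersteinMap ν k φ h u p)) := by
    simpa only [U, Function.iterate_succ_apply'] using hk.tendsto_hammersteinMap hφ
      (fun n => (hUm n).aestronglyMeasurable) (fun n => .of_forall (hUC n)) (.of_forall hu) p
  exact tendsto_nhds_unique hlim ((tendsto_add_atTop_iff_nat 1).2 (hu p))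

end IsWeightedKernel

end Hammerstein

section ProductIntegral

variable {α β : Type*} [MeasurableSpace α] [MeasurableSpace β] {μ : Measure α} {ν : Measure β}
  [SFinite μ] [SFinite ν] {F : α × β → ℝ} {B : β → ℝ}

theorem integrable_prod_of_integral_le (hFm : AEStronglyMeasurable F (μ.prod ν))
    (hF0 : ∀ z, 0 ≤ F z) (hF : ∀ᵐ y ∂ν, Integrable (fun x => F (x, y)) μ) (hB : Integrable B ν)
    (hFB : ∀ᵐ y ∂ν, ∫ x, F (x, y) ∂μ ≤ B y) : Integrable F (μ.prod ν) := by
  refine (integrable_prod_iff' hFm).2 ⟨hF, hB.mono' hFm.norm.prod_swap.integral_prod_right' ?_⟩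
  filter_upwards [hFB] with y hy
  simp_rw [Real.norm_of_nonneg (hF0 _)]
  rwa [Real.norm_of_nonneg (integral_nonneg fun x => hF0 _)]

theorem integral_prod_le_of_integral_le (hF : Integrable F (μ.prod ν)) (hB : Integrable B ν)
    (hFB : ∀ᵐ y ∂ν, ∫ x, F (x, y) ∂μ ≤ B y) : ∫ z, F z ∂μ.prod ν ≤ ∫ y, B y ∂ν := by
  rw [integral_prod_symm _ hF]
  exact integral_mono_ae hF.integral_prod_right hB hFB

end ProductIntegral

section WeaklySingularIntegral

variable {a l : ℝ}

theorem integral_Iio_sub_rpow_mul_exp (ha : 0 < a) (hl : 0 < l) (t : ℝ) :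
    ∫ s in Set.Iio t, (t - s) ^ (a - 1) * rexp (l * s) = (1 / l) ^ a * Gamma a * rexp (l * t) := by
  have hsubst := (volume.measurePreserving_sub_left t).setIntegral_preimage_emb
    (measurableEmbedding_subLeft t) (fun r => r ^ (a - 1) * rexp (-(l * r)) * rexp (l * t))
    (Set.Ioi 0)
  rw [Set.preimage_const_sub_Ioi, sub_zero,
    integral_mul_const (rexp (l * t)) fun r => r ^ (a - 1) * rexp (-(l * r)),
    Real.integral_rpow_mul_exp_neg_mul_Ioi ha hl] at hsubst
  rw [← hsubst]
  refine integral_congr_ae (.of_forall fun s => ?_)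
  beta_reduce
  rw [mul_assoc, ← Real.exp_add]
  ring_nf

theorem integrableOn_Iio_sub_rpow_mul_exp (ha : 0 < a) (hl : 0 < l) (t : ℝ) :
    IntegrableOn (fun s => (t - s) ^ (a - 1) * rexp (l * s)) (Set.Iio t) :=
  .of_integral_ne_zero <| by
    rw [integral_Iio_sub_rpow_mul_exp ha hl]
    have := Gamma_pos_of_pos ha
    positivity

theorem setIntegral_sub_rpow_mul_exp_le (ha : 0 < a) (hl : 0 < l) {t : ℝ} {S : Set ℝ}
    (hS : S ⊆ Set.Iio t) :
    ∫ s in S, (t - s) ^ (a - 1) * rexp (l * s) ≤ (1 / l) ^ a * Gamma a * rexp (l * t) := by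
  rw [← integral_Iio_sub_rpow_mul_exp ha hl t]
  refine setIntegral_mono_set (integrableOn_Iio_sub_rpow_mul_exp ha hl t) ?_ hS.eventuallyLE
  filter_upwards [ae_restrict_mem measurableSet_Iio] with s hs
  have : 0 ≤ t - s := sub_nonneg.2 (le_of_lt hs)
  positivity

end WeaklySingularIntegral

section RieszWeight

theorem norm_rpow_neg_le_indicator_ball_add {E : Type*} [SeminormedAddCommGroup E] {γ r : ℝ}
    (hγ : 0 ≤ γ) (hr : 0 < r) (y : E) :
    ‖y‖ ^ (-γ) ≤ (Metric.ball 0 r).indicator (fun y : E => ‖y‖ ^ (-γ)) y + r ^ (-γ) := by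
  by_cases hy : y ∈ Metric.ball 0 r
  · rw [Set.indicator_of_mem hy]
    exact le_add_of_nonneg_right (by positivity)
  · rw [Set.indicator_of_notMem hy, zero_add]
    exact Real.rpow_le_rpow_of_nonpos hr (by simpa using hy) (neg_nonpos.2 hγ)

variable {E : Type*} [NormedAddCommGroup E] [NormedSpace ℝ E] [FiniteDimensional ℝ E]
  [MeasurableSpace E] [BorelSpace E] (μ : Measure E) [μ.IsAddHaarMeasure] {γ r : ℝ}

theorem integrableOn_ball_norm_rpow_neg (hd : 1 ≤ Module.finrank ℝ E)
    (hγ : γ < Module.finrank ℝ E) (r : ℝ) :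
    IntegrableOn (fun y : E => ‖y‖ ^ (-γ)) (Metric.ball 0 r) μ := by
  refine integrableOn_ball_of_norm_le_rpow (C := 1) hd hγ (.of_forall fun y => ?_)
    (measurable_norm.pow_const (-γ)).aestronglyMeasurable
  rw [one_mul, Real.norm_of_nonneg (by positivity)]

theorem setIntegral_ball_norm_rpow (hr : 0 < r) (s : ℝ) :
    ∫ y in Metric.ball (0 : E) r, ‖y‖ ^ s ∂μ =
      r ^ (Module.finrank ℝ E + s) * ∫ y in Metric.ball (0 : E) 1, ‖y‖ ^ s ∂μ := by
  have hscale := Measure.setIntegral_comp_smul_of_pos μ (fun y : E => ‖y‖ ^ s)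
    (Metric.ball 0 1) hr
  simp_rw [norm_smul, Real.norm_of_nonneg hr.le, Real.mul_rpow hr.le (norm_nonneg _),
    integral_const_mul, smul_unitBall_of_pos hr, smul_eq_mul] at hscale
  rw [Real.rpow_add hr, Real.rpow_natCast, mul_assoc, hscale, mul_inv_cancel_left₀ (by positivity)]

end RieszWeight

section HeatKernel

variable {N : ℕ} {γ t : ℝ}

theorem heatKernel_nonneg (ht : 0 ≤ t) (x : EuclideanSpace ℝ (Fin N)) : 0 ≤ heatKernel N t x := by
  unfold heatKernel
  positivity

theorem heatKernel_le (ht : 0 ≤ t) (x : EuclideanSpace ℝ (Fin N)) :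
    heatKernel N t x ≤ (4 * π * t) ^ (-(N : ℝ) / 2) := by
  refine mul_le_of_le_one_right (by positivity) (Real.exp_le_one_iff.2 ?_)
  exact div_nonpos_of_nonpos_of_nonneg (neg_nonpos.2 (by positivity)) (by positivity)

theorem measurable_heatKernel (N : ℕ) : Measurable (Function.uncurry (heatKernel N)) := by
  unfold heatKernel Function.uncurry
  fun_prop

theorem integral_heatKernel (N : ℕ) (ht : 0 < t) : ∫ y, heatKernel N t y = 1 := by
  have hgauss := GaussianFourier.integral_rexp_neg_mul_sq_norm (V := EuclideanSpace ℝ (Fin N))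
    (show 0 < (4 * t)⁻¹ by positivity)
  rw [div_inv_eq_mul, finrank_euclideanSpace_fin, ← mul_assoc, mul_comm π 4] at hgauss
  simp_rw [heatKernel, integral_const_mul, div_eq_inv_mul _ (4 * t), mul_neg, ← neg_mul, hgauss]
  rw [← Real.rpow_add (by positivity), neg_div, neg_add_cancel, Real.rpow_zero]

theorem integrable_heatKernel (N : ℕ) (ht : 0 < t) : Integrable (heatKernel N t) :=
  .of_integral_ne_zero (by rw [integral_heatKernel N ht]; exact one_ne_zero)

theorem integral_heatKernel_sub_left (ht : 0 < t) (x : EuclideanSpace ℝ (Fin N)) :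
    ∫ y, heatKernel N t (x - y) = 1 := by
  rw [integral_sub_left_eq_self (heatKernel N t), integral_heatKernel N ht]

/-- The constant in the bound of `∫ G_t(x - y) |y|^{-γ} dy` by a multiple of `t^{-γ/2}`: the first
summand is the contribution of the ball of radius `√t`, the second that of its complement. -/
noncomputable def heatRieszConst (N : ℕ) (γ : ℝ) : ℝ :=
  (4 * π) ^ (-(N : ℝ) / 2) *
    (∫ y in Metric.ball (0 : EuclideanSpace ℝ (Fin N)) 1, ‖y‖ ^ (-γ)) + 1

theorem heatRieszConst_pos (N : ℕ) (γ : ℝ) : 0 < heatRieszConst N γ := by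
  have : 0 ≤ ∫ y in Metric.ball (0 : EuclideanSpace ℝ (Fin N)) 1, ‖y‖ ^ (-γ) :=
    integral_nonneg fun y => by positivity
  unfold heatRieszConst
  positivity

/-- Dominates `G_t(x - y) |y|^{-γ}`, as a function of `y`, uniformly over the position of the
singularity: the heat kernel is bounded by its maximum on the ball of radius `√t`, the power by
its value at radius `√t` elsewhere. -/
noncomputable def heatRieszMajorant (N : ℕ) (γ t : ℝ) (x y : EuclideanSpace ℝ (Fin N)) : ℝ :=
  (4 * π * t) ^ (-(N : ℝ) / 2) * (Metric.ball 0 √t).indicator (fun y => ‖y‖ ^ (-γ)) y +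
    √t ^ (-γ) * heatKernel N t (x - y)

theorem heatKernel_mul_norm_rpow_le (hγ : 0 ≤ γ) (ht : 0 < t) (x y : EuclideanSpace ℝ (Fin N)) :
    heatKernel N t (x - y) * ‖y‖ ^ (-γ) ≤ heatRieszMajorant N γ t x y := by
  have hG := heatKernel_nonneg ht.le (x - y)
  have hball : 0 ≤ (Metric.ball 0 √t).indicator (fun y => ‖y‖ ^ (-γ)) y :=
    Set.indicator_nonneg (fun y _ => by positivity) y
  refine (mul_le_mul_of_nonneg_left
    (norm_rpow_neg_le_indicator_ball_add hγ (Real.sqrt_pos.2 ht) y) hG).trans ?_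
  rw [mul_add, mul_comm _ (√t ^ (-γ))]
  exact add_le_add_left (mul_le_mul_of_nonneg_right (heatKernel_le ht.le _) hball) _

theorem integrable_heatRieszMajorant (hN : 1 ≤ N) (hγN : γ < N) (ht : 0 < t)
    (x : EuclideanSpace ℝ (Fin N)) : Integrable (heatRieszMajorant N γ t x) :=
  (((integrable_indicator_iff Metric.isOpen_ball.measurableSet).2
    (integrableOn_ball_norm_rpow_neg volume (by simpa using hN) (by simpa using hγN) √t)).const_mul
      _).add (((integrable_heatKernel N ht).comp_sub_left x).const_mul _)

theorem integral_heatRieszMajorant (hN : 1 ≤ N) (hγN : γ < N) (ht : 0 < t)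
    (x : EuclideanSpace ℝ (Fin N)) :
    ∫ y, heatRieszMajorant N γ t x y = heatRieszConst N γ * t ^ (-γ / 2) := by
  have hball := integrableOn_ball_norm_rpow_neg (volume : Measure (EuclideanSpace ℝ (Fin N)))
    (by simpa using hN) (by simpa using hγN) √t
  have hsqrt : ∀ s : ℝ, √t ^ s = t ^ (s / 2) := fun s => by
    rw [Real.sqrt_eq_rpow, ← Real.rpow_mul ht.le, one_div_mul_eq_div]
  have hexp : t ^ (-(N : ℝ) / 2) * t ^ ((N + -γ) / 2) = t ^ (-γ / 2) := by
    rw [← Real.rpow_add ht]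
    ring_nf
  unfold heatRieszMajorant heatRieszConst
  rw [integral_add
      (((integrable_indicator_iff Metric.isOpen_ball.measurableSet).2 hball).const_mul _)
      (((integrable_heatKernel N ht).comp_sub_left x).const_mul _),
    integral_const_mul, integral_const_mul, integral_indicator Metric.isOpen_ball.measurableSet,
    setIntegral_ball_norm_rpow volume (Real.sqrt_pos.2 ht), integral_heatKernel_sub_left ht,
    finrank_euclideanSpace_fin, Real.mul_rpow (by positivity) ht.le, hsqrt, hsqrt, ← hexp]
  ring

theorem integrable_heatKernel_mul_norm_rpow (hγ0 : 0 ≤ γ) (hγN : γ < N) (ht : 0 < t)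
    (x : EuclideanSpace ℝ (Fin N)) :
    Integrable fun y => heatKernel N t (x - y) * ‖y‖ ^ (-γ) := by
  have hN : 1 ≤ N := by exact_mod_cast hγ0.trans_lt hγN
  refine (integrable_heatRieszMajorant hN hγN ht x).mono'
    (((integrable_heatKernel N ht).comp_sub_left x).aestronglyMeasurable.mul
      (measurable_norm.pow_const (-γ)).aestronglyMeasurable) (.of_forall fun y => ?_)
  rw [Real.norm_of_nonneg (mul_nonneg (heatKernel_nonneg ht.le _) (by positivity))]
  exact heatKernel_mul_norm_rpow_le hγ0 ht x y

theorem integral_heatKernel_mul_norm_rpow_le (hγ0 : 0 ≤ γ) (hγN : γ < N) (ht : 0 < t)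
    (x : EuclideanSpace ℝ (Fin N)) :
    ∫ y, heatKernel N t (x - y) * ‖y‖ ^ (-γ) ≤ heatRieszConst N γ * t ^ (-γ / 2) := by
  have hN : 1 ≤ N := by exact_mod_cast hγ0.trans_lt hγN
  rw [← integral_heatRieszMajorant hN hγN ht x]
  exact integral_mono (integrable_heatKernel_mul_norm_rpow hγ0 hγN ht x)
    (integrable_heatRieszMajorant hN hγN ht x) (heatKernel_mul_norm_rpow_le hγ0 ht x)

end HeatKernel

section Duhamel

variable {N : ℕ} {γ l t : ℝ} {S : Set (EuclideanSpace ℝ (Fin N) × ℝ)}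

/-- The space-time kernel `G_{t-s}(x - y) |y|^{-γ} 1_{0 < s < t}` of the Duhamel term, at
`p = (x, t)` and `q = (y, s)`. -/
noncomputable def duhamelKernel (N : ℕ) (γ : ℝ) (p q : EuclideanSpace ℝ (Fin N) × ℝ) : ℝ :=
  if q.2 ∈ Set.Ioo 0 p.2 then heatKernel N (p.2 - q.2) (p.1 - q.1) * ‖q.1‖ ^ (-γ) else 0

theorem duhamelKernel_nonneg (p q : EuclideanSpace ℝ (Fin N) × ℝ) : 0 ≤ duhamelKernel N γ p q := by
  unfold duhamelKernel
  split_ifs with hq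
  · exact mul_nonneg (heatKernel_nonneg (sub_nonneg.2 hq.2.le) _) (by positivity)
  · exact le_rfl

theorem measurable_duhamelKernel (N : ℕ) (γ : ℝ) :
    Measurable (Function.uncurry (duhamelKernel N γ)) := by
  have hG : Measurable fun z : (EuclideanSpace ℝ (Fin N) × ℝ) × EuclideanSpace ℝ (Fin N) × ℝ =>
      heatKernel N (z.1.2 - z.2.2) (z.1.1 - z.2.1) :=
    (measurable_heatKernel N).comp (f := fun z : (EuclideanSpace ℝ (Fin N) × ℝ) ×
      EuclideanSpace ℝ (Fin N) × ℝ => (z.1.2 - z.2.2, z.1.1 - z.2.1)) (by fun_prop)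
  refine Measurable.ite ?_ (hG.mul (by fun_prop)) measurable_const
  exact (measurableSet_lt measurable_const (measurable_snd.comp measurable_snd)).inter
    (measurableSet_lt (measurable_snd.comp measurable_snd) (measurable_snd.comp measurable_fst))

theorem integrable_duhamelKernel_section (hγ0 : 0 ≤ γ) (hγN : γ < N)
    (p : EuclideanSpace ℝ (Fin N) × ℝ) (s : ℝ) :
    Integrable fun y => duhamelKernel N γ p (y, s) := by
  by_cases hs : s ∈ Set.Ioo 0 p.2
  · simpa only [duhamelKernel, if_pos hs] using
      integrable_heatKernel_mul_norm_rpow hγ0 hγN (sub_pos.2 hs.2) p.1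
  · simp only [duhamelKernel, if_neg hs]
    exact integrable_zero _ _ _

/-- Dominates `∫ G_{t-s}(x - y) |y|^{-γ} dy · e^{ls}` for `0 < s < t`, as a function of `s`,
uniformly in `x`. -/
noncomputable def duhamelMajorant (N : ℕ) (γ l t : ℝ) : ℝ → ℝ :=
  (Set.Ioo 0 t).indicator fun s => heatRieszConst N γ * ((t - s) ^ (1 - γ / 2 - 1) * rexp (l * s))

theorem integral_duhamelKernel_mul_exp_section_le (hγ0 : 0 ≤ γ) (hγN : γ < N)
    (p : EuclideanSpace ℝ (Fin N) × ℝ) (s : ℝ) :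
    ∫ y, duhamelKernel N γ p (y, s) * rexp (l * |s|) ≤ duhamelMajorant N γ l p.2 s := by
  rw [integral_mul_const, duhamelMajorant]
  by_cases hs : s ∈ Set.Ioo 0 p.2
  · simp only [duhamelKernel, if_pos hs, Set.indicator_of_mem hs, abs_of_pos hs.1]
    rw [← mul_assoc, show 1 - γ / 2 - 1 = -γ / 2 by ring]
    exact mul_le_mul_of_nonneg_right
      (integral_heatKernel_mul_norm_rpow_le hγ0 hγN (sub_pos.2 hs.2) p.1) (Real.exp_pos _).le
  · simp only [duhamelKernel, if_neg hs, Set.indicator_of_notMem hs, integral_zero, zero_mul,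
      le_refl]

theorem integrable_duhamelMajorant (hγ2 : γ < 2) (hl : 0 < l) (t : ℝ) :
    Integrable (duhamelMajorant N γ l t) :=
  (integrable_indicator_iff measurableSet_Ioo).2
    (((integrableOn_Iio_sub_rpow_mul_exp (by linarith) hl t).mono_set
      Set.Ioo_subset_Iio_self).const_mul _)

theorem integral_duhamelMajorant_le (hγ2 : γ < 2) (hl : 0 < l) (t : ℝ) :
    ∫ s, duhamelMajorant N γ l t s ≤
      heatRieszConst N γ * ((1 / l) ^ (1 - γ / 2) * Gamma (1 - γ / 2) * rexp (l * t)) := by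
  rw [duhamelMajorant, integral_indicator measurableSet_Ioo, integral_const_mul]
  exact mul_le_mul_of_nonneg_left
    (setIntegral_sub_rpow_mul_exp_le (by linarith) hl Set.Ioo_subset_Iio_self)
    (heatRieszConst_pos N γ).le

theorem integrable_duhamelKernel_mul_exp (hγ0 : 0 ≤ γ) (hγ2 : γ < 2) (hγN : γ < N) (hl : 0 < l)
    (p : EuclideanSpace ℝ (Fin N) × ℝ) :
    Integrable fun q => duhamelKernel N γ p q * rexp (l * |q.2|) :=
  integrable_prod_of_integral_le
    (((measurable_duhamelKernel N γ).comp measurable_prodMk_left).mul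
      (by fun_prop)).aestronglyMeasurable
    (fun q => mul_nonneg (duhamelKernel_nonneg p q) (Real.exp_pos _).le)
    (.of_forall fun s => (integrable_duhamelKernel_section hγ0 hγN p s).mul_const (rexp (l * |s|)))
    (integrable_duhamelMajorant hγ2 hl p.2)
    (.of_forall (integral_duhamelKernel_mul_exp_section_le hγ0 hγN p))

theorem isWeightedKernel_duhamelKernel (hγ0 : 0 ≤ γ) (hγ2 : γ < 2) (hγN : γ < N) (hl : 0 < l) :
    IsWeightedKernel volume (duhamelKernel N γ) (fun q => rexp (l * |q.2|))
      (heatRieszConst N γ * ((1 / l) ^ (1 - γ / 2) * Gamma (1 - γ / 2))) := by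
  have hM := heatRieszConst_pos N γ
  have hΓ : 0 < Gamma (1 - γ / 2) := Gamma_pos_of_pos (by linarith)
  exact
    { measurable := measurable_duhamelKernel N γ
      nonneg := duhamelKernel_nonneg
      one_le_weight := fun q => Real.one_le_exp (by positivity)
      const_nonneg := by positivity
      integrable := integrable_duhamelKernel_mul_exp hγ0 hγ2 hγN hl
      integral_le := fun p =>
        calc ∫ q, duhamelKernel N γ p q * rexp (l * |q.2|)
            ≤ ∫ s, duhamelMajorant N γ l p.2 s :=
              integral_prod_le_of_integral_le (integrable_duhamelKernel_mul_exp hγ0 hγ2 hγN hl p)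
                (integrable_duhamelMajorant hγ2 hl p.2)
                (.of_forall (integral_duhamelKernel_mul_exp_section_le hγ0 hγN p))
          _ ≤ heatRieszConst N γ * ((1 / l) ^ (1 - γ / 2) * Gamma (1 - γ / 2) * rexp (l * p.2)) :=
              integral_duhamelMajorant_le hγ2 hl p.2
          _ ≤ heatRieszConst N γ * ((1 / l) ^ (1 - γ / 2) * Gamma (1 - γ / 2)) *
                rexp (l * |p.2|) := by
              rw [← mul_assoc]
              gcongr
              exact le_abs_self _ }

theorem exists_isWeightedKernel_duhamelKernel (hγ0 : 0 ≤ γ) (hγ2 : γ < 2) (hγN : γ < N) (K : ℝ) :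
    ∃ l > 0, ∃ c, K * c < 1 ∧
      IsWeightedKernel volume (duhamelKernel N γ) (fun q => rexp (l * |q.2|)) c := by
  have hpow : Tendsto (fun l : ℝ => (1 / l) ^ (1 - γ / 2)) atTop (nhds 0) := by
    simpa only [one_div, Real.zero_rpow (show 1 - γ / 2 ≠ 0 by linarith)] using
      tendsto_inv_atTop_zero.rpow_const (.inr (show 0 ≤ 1 - γ / 2 by linarith))
  have hlim : Tendsto (fun l : ℝ =>
      K * (heatRieszConst N γ * ((1 / l) ^ (1 - γ / 2) * Gamma (1 - γ / 2)))) atTop (nhds 0) := by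
    simpa only [zero_mul, mul_zero] using
      ((hpow.mul_const _).const_mul (heatRieszConst N γ)).const_mul K
  obtain ⟨l, hlK, hl⟩ := ((hlim.eventually_lt_const one_pos).and (eventually_gt_atTop 0)).exists
  exact ⟨l, hl, _, hlK, isWeightedKernel_duhamelKernel hγ0 hγ2 hγN hl⟩

theorem integral_duhamelKernel_mul {f : EuclideanSpace ℝ (Fin N) × ℝ → ℝ}
    {x : EuclideanSpace ℝ (Fin N)} (ht : 0 ≤ t) (hS : Prod.snd ⁻¹' Set.Ioo 0 t ⊆ S)
    (hf : IntegrableOn (fun q => duhamelKernel N γ (x, t) q * f q) S) :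
    ∫ q in S, duhamelKernel N γ (x, t) q * f q =
      ∫ s in (0 : ℝ)..t, ∫ y, heatKernel N (t - s) (x - y) * ‖y‖ ^ (-γ) * f (y, s) := by
  have hvanish : ∀ q ∉ S, duhamelKernel N γ (x, t) q * f q = 0 := fun q hq => by
    have hqt : q.2 ∉ Set.Ioo 0 t := fun h => hq (hS h)
    simp only [duhamelKernel, if_neg hqt, zero_mul]
  have hint := hf.integrable_of_forall_notMem_eq_zero hvanish
  rw [setIntegral_eq_integral_of_forall_compl_eq_zero hvanish]
  rw [Measure.volume_eq_prod] at hint ⊢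
  rw [integral_prod_symm _ hint, intervalIntegral.integral_of_le ht,
    integral_Ioc_eq_integral_Ioo, ← integral_indicator measurableSet_Ioo]
  refine integral_congr_ae (.of_forall fun s => ?_)
  by_cases hs : s ∈ Set.Ioo 0 t
  · simp only [Set.indicator_of_mem hs, duhamelKernel, if_pos hs]
  · simp only [Set.indicator_of_notMem hs, duhamelKernel, if_neg hs, zero_mul, integral_zero]

end Duhamel

section MildSolution

open scoped NNReal

variable {N : ℕ} {γ c l t C T : ℝ} {g φ : ℝ → ℝ} {K : ℝ≥0} {u₀ : EuclideanSpace ℝ (Fin N) → ℝ}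
  {u v : EuclideanSpace ℝ (Fin N) → ℝ → ℝ}

/-- The free evolution `∫ G_t(x - y) u₀(y) dy` at `p = (x, t)`. It is set to `0` for `t ≤ 0`, where
the formula for `G_t` no longer defines a heat kernel. -/
noncomputable def heatForcing (N : ℕ) (u₀ : EuclideanSpace ℝ (Fin N) → ℝ)
    (p : EuclideanSpace ℝ (Fin N) × ℝ) : ℝ :=
  if 0 < p.2 then ∫ y, heatKernel N p.2 (p.1 - y) * u₀ y else 0

theorem stronglyMeasurable_heatForcing (hu₀ : AEMeasurable u₀) :
    StronglyMeasurable (heatForcing N u₀) := by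
  have hmk : ∀ p : EuclideanSpace ℝ (Fin N) × ℝ, ∫ y, heatKernel N p.2 (p.1 - y) * u₀ y =
      ∫ y, heatKernel N p.2 (p.1 - y) * hu₀.mk u₀ y := fun p =>
    integral_congr_ae (hu₀.ae_eq_mk.mono fun y hy => by simp only [hy])
  unfold heatForcing
  simp_rw [hmk]
  refine StronglyMeasurable.ite (measurableSet_lt measurable_const measurable_snd)
    (StronglyMeasurable.integral_prod_right (Measurable.stronglyMeasurable ?_))
    stronglyMeasurable_const
  exact ((measurable_heatKernel N).comp
    (f := fun z : (EuclideanSpace ℝ (Fin N) × ℝ) × EuclideanSpace ℝ (Fin N) =>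
      (z.1.2, z.1.1 - z.2)) (by fun_prop)).mul (hu₀.measurable_mk.comp measurable_snd)

theorem heatForcing_nonneg (hu₀ : ∀ᵐ x, 0 ≤ u₀ x) (p : EuclideanSpace ℝ (Fin N) × ℝ) :
    0 ≤ heatForcing N u₀ p := by
  unfold heatForcing
  split_ifs with hp
  · exact integral_nonneg_of_ae (hu₀.mono fun y hy => mul_nonneg (heatKernel_nonneg hp.le _) hy)
  · exact le_rfl

theorem norm_heatForcing_le (hC : 0 ≤ C) (hu₀ : ∀ᵐ x, |u₀ x| ≤ C)
    (p : EuclideanSpace ℝ (Fin N) × ℝ) : ‖heatForcing N u₀ p‖ ≤ C := by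
  unfold heatForcing
  split_ifs with hp
  · calc ‖∫ y, heatKernel N p.2 (p.1 - y) * u₀ y‖ ≤ ∫ y, heatKernel N p.2 (p.1 - y) * C := by
          refine norm_integral_le_of_norm_le
            (((integrable_heatKernel N hp).comp_sub_left p.1).mul_const C) (hu₀.mono fun y hy => ?_)
          have hG := heatKernel_nonneg hp.le (p.1 - y)
          rw [norm_mul, Real.norm_of_nonneg hG]
          exact mul_le_mul_of_nonneg_left hy hG
      _ = C := by rw [integral_mul_const, integral_heatKernel_sub_left hp, one_mul]
  · rwa [norm_zero]

theorem hammersteinMap_duhamelKernel_eq {S : Set (EuclideanSpace ℝ (Fin N) × ℝ)} (ht : 0 < t)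
    (hS : Prod.snd ⁻¹' Set.Ioo 0 t ⊆ S) (x : EuclideanSpace ℝ (Fin N))
    (hint : IntegrableOn (fun q => duhamelKernel N γ (x, t) q • φ (Function.uncurry u q)) S) :
    hammersteinMap (volume.restrict S) (duhamelKernel N γ) φ (heatForcing N u₀)
        (Function.uncurry u) (x, t) =
      (∫ y, heatKernel N t (x - y) * u₀ y) + ∫ s in (0 : ℝ)..t, ∫ y,
        heatKernel N (t - s) (x - y) * ‖y‖ ^ (-γ) * φ (u y s) := by
  simp only [hammersteinMap, heatForcing, if_pos ht]
  exact congrArg _ (integral_duhamelKernel_mul ht.le hS hint)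

theorem IsLipSolution.congr (hu : IsLipSolution N γ g u₀ u) (hgφ : Set.EqOn g φ (Set.Ici 0)) :
    IsLipSolution N γ φ u₀ u := by
  refine ⟨hu.1, hu.2.1, hu.2.2.1, fun T hT => (hu.2.2.2 T hT).mono fun p hp hpT => ?_⟩
  rw [hp hpT]
  refine congrArg _ (intervalIntegral.integral_congr fun s hs => ?_)
  rw [Set.uIcc_of_le hpT.1.le] at hs
  exact integral_congr_ae (.of_forall fun y => by simp only [hgφ (hu.1 y s hs.1)])

theorem IsLipSolution.exists_ae_norm_le_mul {w : EuclideanSpace ℝ (Fin N) × ℝ → ℝ}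
    (hw : ∀ p, 1 ≤ w p) (hu : IsLipSolution N γ φ u₀ u) (hT : 0 < T) :
    ∃ C, ∀ᵐ p ∂volume.restrict (Prod.snd ⁻¹' Set.Ioo 0 T), ‖Function.uncurry u p‖ ≤ C * w p := by
  obtain ⟨C, hC⟩ := hu.2.2.1 T hT
  refine ⟨|C|, (ae_restrict_iff' (measurable_snd measurableSet_Ioo)).2 (hC.mono fun p hp hpT => ?_)⟩
  exact ((hp hpT).trans (le_abs_self C)).trans (le_mul_of_one_le_right (abs_nonneg C) (hw p))

theorem IsLipSolution.ae_eq_hammersteinMap {w : EuclideanSpace ℝ (Fin N) × ℝ → ℝ}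
    (hk : IsWeightedKernel volume (duhamelKernel N γ) w c) (hφ : LipschitzWith K φ)
    (hu : IsLipSolution N γ φ u₀ u) (hT : 0 < T) :
    Function.uncurry u =ᵐ[volume.restrict (Prod.snd ⁻¹' Set.Ioo 0 T)]
      hammersteinMap (volume.restrict (Prod.snd ⁻¹' Set.Ioo 0 T)) (duhamelKernel N γ) φ
        (heatForcing N u₀) (Function.uncurry u) := by
  obtain ⟨C, hC⟩ := hu.exists_ae_norm_le_mul hk.one_le_weight hT
  refine (ae_restrict_iff' (measurable_snd measurableSet_Ioo)).2
    ((hu.2.2.2 T hT).mono fun p hp hpT => ?_)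
  rw [← Prod.mk.eta (p := p), hammersteinMap_duhamelKernel_eq hpT.1
    (Set.preimage_mono (Set.Ioo_subset_Ioo_right hpT.2.le)) p.1
    ((hk.restrict _).integrable_smul_comp hφ hu.2.1.restrict.aestronglyMeasurable hC p)]
  exact hp ⟨hpT.1, hpT.2.le⟩

theorem IsLipSolution.ae_eq (hγ0 : 0 ≤ γ) (hγ2 : γ < 2) (hγN : γ < N) (hφ : LipschitzWith K φ)
    (hu : IsLipSolution N γ φ u₀ u) (hv : IsLipSolution N γ φ u₀ v) :
    ∀ᵐ p : EuclideanSpace ℝ (Fin N) × ℝ, 0 < p.2 → u p.1 p.2 = v p.1 p.2 := by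
  obtain ⟨l, -, c, hKc, hk⟩ := exists_isWeightedKernel_duhamelKernel hγ0 hγ2 hγN K
  have hstrip : ∀ n : ℕ, ∀ᵐ p : EuclideanSpace ℝ (Fin N) × ℝ,
      p.2 ∈ Set.Ioo 0 ((n : ℝ) + 1) → u p.1 p.2 = v p.1 p.2 := fun n => by
    have hT : (0 : ℝ) < n + 1 := by positivity
    obtain ⟨C, hC⟩ := hu.exists_ae_norm_le_mul hk.one_le_weight hT
    obtain ⟨C', hC'⟩ := hv.exists_ae_norm_le_mul hk.one_le_weight hT
    exact (ae_restrict_iff' (measurable_snd measurableSet_Ioo)).1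
      ((hk.restrict _).ae_eq_of_ae_eq_hammersteinMap hφ hKc
        hu.2.1.restrict.aestronglyMeasurable hC hv.2.1.restrict.aestronglyMeasurable hC'
        (hu.ae_eq_hammersteinMap hk hφ hT) (hv.ae_eq_hammersteinMap hk hφ hT))
  filter_upwards [ae_all_iff.2 hstrip] with p hp hp0
  obtain ⟨n, hn⟩ := exists_nat_gt p.2
  exact hp n ⟨hp0, hn.trans (lt_add_one _)⟩

theorem isLipSolution_of_hammersteinMap_eq
    (hk : IsWeightedKernel volume (duhamelKernel N γ) (fun q => rexp (l * |q.2|)) c) (hl : 0 ≤ l)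
    (hφ : LipschitzWith K φ) (hφ0 : ∀ r, 0 ≤ φ r) (hu₀ : ∀ᵐ x, 0 ≤ u₀ x)
    (hum : StronglyMeasurable (Function.uncurry u)) (hC : 0 ≤ C)
    (huC : ∀ p, ‖Function.uncurry u p‖ ≤ C * rexp (l * |p.2|))
    (hfix : hammersteinMap volume (duhamelKernel N γ) φ (heatForcing N u₀) (Function.uncurry u) =
      Function.uncurry u) :
    IsLipSolution N γ φ u₀ u := by
  refine ⟨fun x t _ => ?_, hum.measurable.aemeasurable, fun T _ => ⟨C * rexp (l * T),
    .of_forall fun p hp => ?_⟩, fun T _ => .of_forall fun p hp => ?_⟩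
  · have hfixt := congrFun hfix (x, t)
    rw [Function.uncurry_apply_pair] at hfixt
    rw [← hfixt]
    exact add_nonneg (heatForcing_nonneg hu₀ _)
      (integral_nonneg fun q => mul_nonneg (duhamelKernel_nonneg _ q) (hφ0 _))
  · refine (huC p).trans ?_
    rw [abs_of_pos hp.1]
    gcongr
    exact hp.2.le
  · have hint := hk.integrable_smul_comp hφ hum.aestronglyMeasurable (.of_forall huC) p
    rw [← integrableOn_univ] at hint
    have hrhs := hammersteinMap_duhamelKernel_eq (u₀ := u₀) hp.1 (Set.subset_univ _) p.1 hint
    rw [Measure.restrict_univ, hfix] at hrhs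
    exact hrhs

theorem exists_isLipSolution (hγ0 : 0 ≤ γ) (hγ2 : γ < 2) (hγN : γ < N) (hφ : LipschitzWith K φ)
    (hφ0 : ∀ r, 0 ≤ φ r) (hu₀m : AEMeasurable u₀) (hu₀ : ∀ᵐ x, 0 ≤ u₀ x)
    (hu₀b : ∃ C, ∀ᵐ x, |u₀ x| ≤ C) : ∃ u, IsLipSolution N γ φ u₀ u := by
  obtain ⟨l, hl, c, hKc, hk⟩ := exists_isWeightedKernel_duhamelKernel hγ0 hγ2 hγN K
  obtain ⟨A, hA⟩ := hu₀b
  have hforcing : ∀ p, ‖heatForcing N u₀ p‖ ≤ |A| * rexp (l * |p.2|) := fun p =>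
    (norm_heatForcing_le (abs_nonneg A) (hA.mono fun _ hx => hx.trans (le_abs_self A)) p).trans
      (le_mul_of_one_le_right (abs_nonneg A) (hk.one_le_weight p))
  obtain ⟨u, hum, ⟨C, hC, huC⟩, hfix⟩ := hk.exists_hammersteinMap_eq_self hφ
    hKc (stronglyMeasurable_heatForcing hu₀m) (abs_nonneg A) hforcing
  exact ⟨Function.curry u,
    isLipSolution_of_hammersteinMap_eq hk hl.le hφ hφ0 hu₀ hum hC huC hfix⟩

theorem lipschitz_existence_uniqueness_general (hγ0 : 0 ≤ γ) (hγ : γ < min 2 (N : ℝ))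
    (hgnn : ∀ r, 0 ≤ r → 0 ≤ g r) (hg : LipschitzOnWith K g (Set.Ici 0)) (hu₀m : AEMeasurable u₀)
    (hu₀nn : ∀ᵐ x, 0 ≤ u₀ x) (hu₀b : ∃ C : ℝ, ∀ᵐ x, |u₀ x| ≤ C) :
    ∃ u : EuclideanSpace ℝ (Fin N) → ℝ → ℝ,
      IsLipSolution N γ g u₀ u ∧
      ∀ v : EuclideanSpace ℝ (Fin N) → ℝ → ℝ, IsLipSolution N γ g u₀ v →
        ∀ᵐ p : EuclideanSpace ℝ (Fin N) × ℝ, 0 < p.2 → u p.1 p.2 = v p.1 p.2 := by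
  obtain ⟨hγ2, hγN⟩ := lt_min_iff.1 hγ
  -- Solutions are non-negative, so only the values of `g` on `[0, ∞)` matter.
  let φ : ℝ → ℝ := fun r => g (max r 0)
  have hφ : LipschitzWith K φ := by
    have hcomp : LipschitzWith (K * 1) φ := lipschitzOnWith_univ.1
      (hg.comp (LipschitzWith.id.max_const 0).lipschitzOnWith fun r _ => le_max_right r 0)
    rwa [mul_one] at hcomp
  have hφg : Set.EqOn φ g (Set.Ici 0) := fun r hr => congrArg g (max_eq_left hr)
  obtain ⟨u, hu⟩ := exists_isLipSolution hγ0 hγ2 hγN hφ (fun r => hgnn _ (le_max_right r 0))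
    hu₀m hu₀nn hu₀b
  exact ⟨u, hu.congr hφg, fun v hv => hu.ae_eq hγ0 hγ2 hγN hφ (hv.congr hφg.symm)⟩

end MildSolution

/-- For `0 < γ < min{2,N}`, a non-decreasing Lipschitz nonlinearity `g` with
`g(0) = 0`, and non-negative essentially bounded measurable initial data
`u₀`, the problem `u_t - Δu = |x|^{-γ} g(u)`, `u(·,0) = u₀` has a unique
(up to a.e. equality) non-negative global mild solution. -/
theorem lipschitz_existence_uniqueness (N : ℕ) (hN : 1 ≤ N) (γ : ℝ)
    (hγ0 : 0 < γ) (hγ : γ < min 2 (N : ℝ))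
    (g : ℝ → ℝ)
    (hgnn : ∀ r : ℝ, 0 ≤ r → 0 ≤ g r)
    (hgmono : ∀ r s : ℝ, 0 ≤ r → r ≤ s → g r ≤ g s)
    (L : ℝ) (hL : 0 < L)
    (hglip : ∀ r s : ℝ, 0 ≤ r → 0 ≤ s → |g r - g s| ≤ L * |r - s|)
    (hg0 : g 0 = 0)
    (u₀ : EuclideanSpace ℝ (Fin N) → ℝ)
    (hu₀m : AEMeasurable u₀)
    (hu₀nn : ∀ᵐ x ∂volume, 0 ≤ u₀ x)
    (hu₀b : ∃ C : ℝ, ∀ᵐ x ∂volume, |u₀ x| ≤ C) :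
    ∃ u : EuclideanSpace ℝ (Fin N) → ℝ → ℝ,
      IsLipSolution N γ g u₀ u ∧
      ∀ v : EuclideanSpace ℝ (Fin N) → ℝ → ℝ, IsLipSolution N γ g u₀ v →
        ∀ᵐ p : EuclideanSpace ℝ (Fin N) × ℝ ∂volume,
          0 < p.2 → u p.1 p.2 = v p.1 p.2 := by
  exact lipschitz_existence_uniqueness_general hγ0.le hγ hgnn
    (LipschitzOnWith.of_dist_le_mul (K := L.toNNReal) fun r hr s hs => by
      simpa only [Real.dist_eq, Real.coe_toNNReal L hL.le] using hglip r s hr hs)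
    hu₀m hu₀nn hu₀b
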